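/- Correctness of the bribery reduction (cautious version): in the bribery construction with m < n, the following are equivalent: (i) there exists α : X → Bool such that ψ[α∪β] is true for every β : Y → Bool; (ii) there exists a profile J⃗' obtained from J⃗ = (J₁, J₂, J₃) by replacing at most one of its ballots by a rational ballot, such that for every r*_new ∈ Kemeny(J⃗') and every r*_old ∈ Kemeny(J⃗) it holds that d(r*_new, J₀, w) < d(r*_old, J₀, w). -/

import Mathlib

/-!
The Kemeny score is additive over the issues (`dist3_eq`), so all comparisons of ballots are made
block by block. A ballot satisfying Γ₀ has one of three shapes (`gamma0_cases`): `Z ∧ T ∧ a`,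
`A ∧ B ∧ a` with ψ false, or `A ∧ T ∧ C`; only the last one has true `b`-issues.

From (i) to (ii), let α be a witness and replace `J₁` by the ballot `target α` of shape
`A ∧ T ∧ C` that encodes α. Up to the common cost `2u` of the `u`-issues, `target α` has score
`2n + 6m + 8`. A ballot of shape `Z ∧ T ∧ a` has score at least `4n + 4m + 7`, which is larger
because `m < n`; a ballot of shape `A ∧ B ∧ a` must encode some `α' ≠ α`, as ψ is false on it, so
its score is at least `2n + 6m + 9`; a ballot with a full `u`-block pays an additional `u`. Hence
every new outcome has all `b`-issues true (`new_outcome_b`), whereas no old outcome has, since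
passing from `A ∧ T ∧ C` to `Z ∧ T ∧ a` lowers the old score (`old_outcome_not_b`).

From (ii) to (i), suppose that every α has a β with ψ[α∪β] false. In a profile in which at least
two ballots are false on all issues other than the `u`-issues, making such an issue true raises
the score by 1, 2 or 3. Passing from `A ∧ T ∧ C` to `A ∧ B ∧ a` therefore saves at least `3m + 4`
and costs at most `3m + 3`, so every outcome has all `b`-issues false (`outcome_b_false`), which
is the largest possible distance from `J₀`.
-/

/-!
Constraint-based judgment aggregation: the bribery construction.
Issues are modelled as an inductive type, ballots as functions `Issue n m → Bool`,
the integrity constraint as a predicate on ballots, and the formula ψ as a Boolean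
function of the assignments to X and Y.
-/

namespace Brib

/-- The issues of the bribery construction. -/
inductive Issue (n m : ℕ) : Type
  | x : Fin n → Issue n m
  | x' : Fin n → Issue n m
  | z : Fin n → Issue n m
  | y : Fin m → Issue n m
  | y' : Fin m → Issue n m
  | t : Fin m → Issue n m
  | u : Fin 3 → Fin (10 * n + 10 * m + 10) → Issue n m
  | a : Issue n m
  | b : Fin (2 * m + 4) → Issue n m
  deriving DecidableEq, Fintype

variable {n m : ℕ}

/-- Hamming distance between two ballots: the number of issues on which they differ. -/
def hamming {I : Type*} [Fintype I] (r r' : I → Bool) : ℕ :=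
  (Finset.univ.filter (fun i => r i ≠ r' i)).card

/-- Weighted Hamming distance: the sum of the weights of the issues on which the
two ballots differ. -/
def whamming {I : Type*} [Fintype I] (w : I → ℕ) (r r' : I → Bool) : ℕ :=
  ∑ i ∈ Finset.univ.filter (fun i => r i ≠ r' i), w i

def bigA (r : Issue n m → Bool) : Prop := ∀ i, r (.x i) ≠ r (.x' i)
def bigZ (r : Issue n m → Bool) : Prop := ∀ i, r (.z i) = true
def bigB (r : Issue n m → Bool) : Prop := ∀ j, r (.y j) ≠ r (.y' j)
def bigT (r : Issue n m → Bool) : Prop := ∀ j, r (.t j) = true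
def bigC (r : Issue n m → Bool) : Prop := ∀ j, r (.b j) = true

/-- The part Γ₀ of the integrity constraint. -/
def gamma0 (psi : (Fin n → Bool) → (Fin m → Bool) → Bool) (r : Issue n m → Bool) : Prop :=
  (r .a = true ∨ bigC r) ∧ (r .a = true → ∀ j, r (.b j) = false) ∧
  (bigC r → r .a = false) ∧
  (bigA r ∨ bigZ r) ∧ (bigA r → ∀ i, r (.z i) = false) ∧
  Xor' (bigB r) (bigT r) ∧ (bigB r → ∀ j, r (.t j) = false) ∧
  (bigZ r → ∀ i, r (.x i) = false ∧ r (.x' i) = false) ∧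
  (bigT r → ∀ j, r (.y j) = false ∧ r (.y' j) = false) ∧
  (bigZ r → (r .a = true ∧ bigT r)) ∧
  ((bigA r ∧ bigB r) →
    (psi (fun i => r (.x i)) (fun j => r (.y j)) = false ∧ r .a = true)) ∧
  ((bigA r ∧ bigT r) → bigC r)

/-- A ballot is rational if it satisfies the integrity constraint
`Γ = Γ₀ ∨ ⋁_{i∈[3]} ⋀_{ℓ∈[u]} u_{i,ℓ}`. -/
def rational (psi : (Fin n → Bool) → (Fin m → Bool) → Bool) (r : Issue n m → Bool) : Prop :=
  gamma0 psi r ∨ ∃ i : Fin 3, ∀ ℓ, r (.u i ℓ) = true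

/-- The profile J⃗ = (J₁, J₂, J₃): the ballot J_{k+1} sets exactly the issues
u_{k+1,ℓ} to true. -/
def Jp (k : Fin 3) : Issue n m → Bool := fun i => match i with
  | .u k' _ => k' == k
  | _ => false

/-- The briber's desired ballot J₀: true exactly on the b- and u₁-issues. -/
def Jzero : Issue n m → Bool := fun i => match i with
  | .b _ => true
  | .u k _ => k == 0
  | _ => false

/-- The briber's weight function: weight 1 on each b-issue, weight 0 elsewhere. -/
def wt : Issue n m → ℕ := fun i => match i with
  | .b _ => 1
  | _ => 0

/-- Cumulative Hamming distance of a ballot to a profile of three ballots. -/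
def dist3 (r p1 p2 p3 : Issue n m → Bool) : ℕ :=
  hamming r p1 + hamming r p2 + hamming r p3

/-- Membership in the set of Kemeny outcomes of the profile (p1, p2, p3):
a rational ballot minimizing the cumulative Hamming distance among rational ballots. -/
def kemenyMem (psi : (Fin n → Bool) → (Fin m → Bool) → Bool)
    (p1 p2 p3 r : Issue n m → Bool) : Prop :=
  rational psi r ∧ ∀ r', rational psi r' → dist3 r p1 p2 p3 ≤ dist3 r' p1 p2 p3

end Brib

namespace Brib

variable {n m : ℕ}

/-! ### Scores as sums over issues -/

/-- Contribution of one issue to the Hamming distance. -/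
def bdiff (v v' : Bool) : ℕ := if v ≠ v' then 1 else 0

/-- Contribution of the issue `i` to the score of a ballot giving it the value `v`, for the
profile `(p1, p2, p3)`. -/
def cost (p1 p2 p3 : Issue n m → Bool) (i : Issue n m) (v : Bool) : ℕ :=
  bdiff v (p1 i) + bdiff v (p2 i) + bdiff v (p3 i)

/-- The issues as a disjoint union of index types, one for each family of issues. -/
def issueEquiv : Issue n m ≃ (Fin n ⊕ Fin n ⊕ Fin n) ⊕ (Fin m ⊕ Fin m ⊕ Fin m) ⊕
    (Fin 3 × Fin (10 * n + 10 * m + 10)) ⊕ Unit ⊕ Fin (2 * m + 4) where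
  toFun
    | .x i => .inl (.inl i)
    | .x' i => .inl (.inr (.inl i))
    | .z i => .inl (.inr (.inr i))
    | .y j => .inr (.inl (.inl j))
    | .y' j => .inr (.inl (.inr (.inl j)))
    | .t j => .inr (.inl (.inr (.inr j)))
    | .u k l => .inr (.inr (.inl (k, l)))
    | .a => .inr (.inr (.inr (.inl ())))
    | .b j => .inr (.inr (.inr (.inr j)))
  invFun
    | .inl (.inl i) => .x i
    | .inl (.inr (.inl i)) => .x' i
    | .inl (.inr (.inr i)) => .z i
    | .inr (.inl (.inl j)) => .y j
    | .inr (.inl (.inr (.inl j))) => .y' j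
    | .inr (.inl (.inr (.inr j))) => .t j
    | .inr (.inr (.inl (k, l))) => .u k l
    | .inr (.inr (.inr (.inl ()))) => .a
    | .inr (.inr (.inr (.inr j))) => .b j
  left_inv := by rintro (_ | _ | _ | _ | _ | _ | _ | _ | _) <;> rfl
  right_inv := by rintro ((_ | _ | _) | (_ | _ | _) | ⟨_, _⟩ | _ | _) <;> rfl

/-- A sum over all issues, split into the `x, x', z`-, the `y, y', t`-, the `u`-, the `a`- and the
`b`-block. -/
lemma sum_issue (f : Issue n m → ℕ) :
    ∑ i, f i = ∑ i : Fin n, (f (.x i) + f (.x' i) + f (.z i)) +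
      ∑ j : Fin m, (f (.y j) + f (.y' j) + f (.t j)) +
      ∑ l, (f (.u 0 l) + f (.u 1 l) + f (.u 2 l)) + f .a + ∑ j, f (.b j) := by
  rw [← Equiv.sum_comp issueEquiv.symm]
  simp only [Fintype.sum_sum_type, Fintype.sum_prod_type, Fin.sum_univ_three,
    Finset.sum_add_distrib, Finset.univ_unique, Finset.sum_singleton]
  simp only [issueEquiv, Equiv.coe_fn_symm_mk]
  ring

lemma dist3_eq (r p1 p2 p3 : Issue n m → Bool) :
    dist3 r p1 p2 p3 = ∑ i, cost p1 p2 p3 i (r i) := by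
  simp only [dist3, hamming, cost, bdiff, Finset.sum_add_distrib, Finset.card_filter]

lemma whamming_eq (r : Issue n m → Bool) :
    whamming wt r Jzero = ∑ j, bdiff (r (.b j)) true := by
  rw [whamming, Finset.sum_filter, sum_issue]
  simp [wt, Jzero, bdiff]

/-! ### Rational ballots -/

lemma gamma0_cases {psi : (Fin n → Bool) → (Fin m → Bool) → Bool}
    {r : Issue n m → Bool} (h : gamma0 psi r) :
    ((∀ i, r (.x i) = false ∧ r (.x' i) = false ∧ r (.z i) = true) ∧
      (∀ j, r (.y j) = false ∧ r (.y' j) = false ∧ r (.t j) = true) ∧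
      r .a = true ∧ ∀ j, r (.b j) = false) ∨
    ((∀ i, r (.x' i) = !r (.x i) ∧ r (.z i) = false) ∧
      (∀ j, r (.y' j) = !r (.y j) ∧ r (.t j) = false) ∧
      r .a = true ∧ (∀ j, r (.b j) = false) ∧
      psi (fun i => r (.x i)) (fun j => r (.y j)) = false) ∨
    ((∀ i, r (.x' i) = !r (.x i) ∧ r (.z i) = false) ∧
      (∀ j, r (.y j) = false ∧ r (.y' j) = false ∧ r (.t j) = true) ∧
      r .a = false ∧ ∀ j, r (.b j) = true) := by
  obtain ⟨-, h2, h3, h4, h5, h6, h7, h8, h9, h10, h11, h12⟩ := h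
  have hneg : ∀ v w : Bool, v ≠ w → w = !v := by decide
  rcases h4 with hA | hZ
  · rcases h6 with ⟨hB, -⟩ | ⟨hT, -⟩
    · obtain ⟨hp, ha⟩ := h11 ⟨hA, hB⟩
      exact .inr (.inl ⟨fun i => ⟨hneg _ _ (hA i), h5 hA i⟩, fun j => ⟨hneg _ _ (hB j), h7 hB j⟩,
        ha, h2 ha, hp⟩)
    · have hC := h12 ⟨hA, hT⟩
      exact .inr (.inr ⟨fun i => ⟨hneg _ _ (hA i), h5 hA i⟩,
        fun j => ⟨(h9 hT j).1, (h9 hT j).2, hT j⟩, h3 hC, hC⟩)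
  · obtain ⟨ha, hT⟩ := h10 hZ
    exact .inl ⟨fun i => ⟨(h8 hZ i).1, (h8 hZ i).2, hZ i⟩,
        fun j => ⟨(h9 hT j).1, (h9 hT j).2, hT j⟩, ha, h2 ha⟩

/-- The ballot of shape `Z ∧ T ∧ a` with the same `u`-issues as `r`. -/
def zBallot (r : Issue n m → Bool) : Issue n m → Bool
  | .z _ => true
  | .t _ => true
  | .a => true
  | .u k l => r (.u k l)
  | _ => false

lemma zBallot_rational (hn : 0 < n) (hm : 0 < m)
    (psi : (Fin n → Bool) → (Fin m → Bool) → Bool) (r : Issue n m → Bool) :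
    rational psi (zBallot r) := by
  left
  have : Nonempty (Fin n) := ⟨⟨0, hn⟩⟩
  have : Nonempty (Fin m) := ⟨⟨0, hm⟩⟩
  simp [gamma0, zBallot, bigA, bigB, bigC, bigT, bigZ, Xor']

/-- The ballot of shape `A ∧ B ∧ a` with the same `x, x', z, u`-issues as `r`, encoding `β` on the
`y`-issues. -/
def abBallot (r : Issue n m → Bool) (β : Fin m → Bool) : Issue n m → Bool
  | .x i => r (.x i)
  | .x' i => r (.x' i)
  | .z i => r (.z i)
  | .y j => β j
  | .y' j => !β j
  | .u k l => r (.u k l)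
  | .a => true
  | _ => false

lemma abBallot_rational (hn : 0 < n) (hm : 0 < m)
    {psi : (Fin n → Bool) → (Fin m → Bool) → Bool} {r : Issue n m → Bool} {β : Fin m → Bool}
    (hr : ∀ i, r (.x' i) = !r (.x i) ∧ r (.z i) = false)
    (hpsi : psi (fun i => r (.x i)) β = false) : rational psi (abBallot r β) := by
  left
  have : Nonempty (Fin n) := ⟨⟨0, hn⟩⟩
  have : Nonempty (Fin m) := ⟨⟨0, hm⟩⟩
  simp [gamma0, abBallot, bigA, bigB, bigC, bigT, bigZ, Xor', hr, hpsi]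

/-- The ballot keeping only the `u`-issues of `r`. -/
def uBallot (r : Issue n m → Bool) : Issue n m → Bool
  | .u k l => r (.u k l)
  | _ => false

/-- The bribed ballot: of shape `A ∧ T ∧ C`, encoding `α`, with all `u`-issues false. -/
def target (α : Fin n → Bool) : Issue n m → Bool
  | .x i => α i
  | .x' i => !α i
  | .t _ => true
  | .b _ => true
  | _ => false

lemma target_rational (hn : 0 < n) (hm : 0 < m)
    (psi : (Fin n → Bool) → (Fin m → Bool) → Bool) (α : Fin n → Bool) :
    rational psi (target α : Issue n m → Bool) := by
  left
  have : Nonempty (Fin n) := ⟨⟨0, hn⟩⟩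
  have : Nonempty (Fin m) := ⟨⟨0, hm⟩⟩
  simp [gamma0, target, bigA, bigB, bigC, bigT, bigZ, Xor']

lemma Jp_rational (psi : (Fin n → Bool) → (Fin m → Bool) → Bool) (k : Fin 3) :
    rational psi (Jp k : Issue n m → Bool) :=
  .inr ⟨k, fun _ => by simp [Jp]⟩

lemma exists_kemeny (psi : (Fin n → Bool) → (Fin m → Bool) → Bool)
    (p1 p2 p3 : Issue n m → Bool) : ∃ r, kemenyMem psi p1 p2 p3 r := by
  classical
  obtain ⟨r, hr, hmin⟩ := Finset.exists_min_image (Finset.univ.filter (rational psi))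
    (fun r => dist3 r p1 p2 p3) ⟨Jp 0, by simpa using Jp_rational psi 0⟩
  exact ⟨r, by simpa using hr, fun r' hr' => hmin r' (by simpa using hr')⟩

/-! ### Outcomes when ψ is refutable for every α -/

/-- `i` is not one of the `u`-issues. -/
def NonU : Issue n m → Prop
  | .u _ _ => False
  | _ => True

lemma cost_le_add_three (p1 p2 p3 : Issue n m → Bool) (i : Issue n m) (v w : Bool) :
    cost p1 p2 p3 i v ≤ cost p1 p2 p3 i w + 3 := by
  unfold cost bdiff; split_ifs <;> omega

/-- In an outcome with a full `u`-block all `b`-issues are false, as long as making an issue outside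
the `u`-blocks true raises the score: dropping all of those keeps the ballot rational. -/
lemma uBlock_b_false {psi : (Fin n → Bool) → (Fin m → Bool) → Bool}
    {p1 p2 p3 r : Issue n m → Bool}
    (hp : ∀ i, NonU i → cost p1 p2 p3 i false + 1 ≤ cost p1 p2 p3 i true)
    (hr : kemenyMem psi p1 p2 p3 r) (k : Fin 3) (hk : ∀ l, r (.u k l) = true)
    (j : Fin (2 * m + 4)) : r (.b j) = false := by
  by_contra hj
  have hj : r (.b j) = true := by simpa using hj
  have hle := hr.2 (uBallot r) (.inr ⟨k, fun l => by simpa [uBallot] using hk l⟩)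
  refine absurd hle (not_le.2 ?_)
  rw [dist3_eq, dist3_eq]
  refine Finset.sum_lt_sum (fun i _ => ?_) ⟨.b j, Finset.mem_univ _, ?_⟩
  · have aux : NonU i → cost p1 p2 p3 i false ≤ cost p1 p2 p3 i (r i) := by
      intro h
      have := hp i h
      cases r i
      · exact le_rfl
      · omega
    cases i <;> first | exact aux trivial | exact le_rfl
  · have := hp (.b j) trivial
    rw [hj]
    simp only [uBallot]
    omega

lemma outcome_b_false (hn : 0 < n) (hm : 0 < m)
    {psi : (Fin n → Bool) → (Fin m → Bool) → Bool}
    (hpsi : ∀ α, ∃ β, psi α β = false) {p1 p2 p3 r : Issue n m → Bool}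
    (hp : ∀ i, NonU i → cost p1 p2 p3 i false + 1 ≤ cost p1 p2 p3 i true)
    (hr : kemenyMem psi p1 p2 p3 r) (j : Fin (2 * m + 4)) : r (.b j) = false := by
  rcases hr.1 with h0 | ⟨k, hk⟩
  swap
  · exact uBlock_b_false hp hr k hk j
  rcases gamma0_cases h0 with h | h | ⟨hx, hy, ha, hb⟩
  · exact h.2.2.2 j
  · exact h.2.2.2.1 j
  exfalso
  obtain ⟨β, hβ⟩ := hpsi (fun i => r (.x i))
  have hle := hr.2 _ (abBallot_rational hn hm hx hβ)
  rw [dist3_eq, dist3_eq, sum_issue, sum_issue] at hle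
  simp only [abBallot, ha, hb, hy] at hle
  have h1 : ∑ j : Fin m, (cost p1 p2 p3 (.y j) (β j) + cost p1 p2 p3 (.y' j) (!β j) +
      cost p1 p2 p3 (.t j) false) ≤ ∑ j : Fin m, (cost p1 p2 p3 (.y j) false +
      cost p1 p2 p3 (.y' j) false + cost p1 p2 p3 (.t j) true) + ∑ _j : Fin m, 2 := by
    rw [← Finset.sum_add_distrib]
    refine Finset.sum_le_sum fun j _ => ?_
    have ht := hp (.t j) trivial
    have e1 := cost_le_add_three p1 p2 p3 (.y j) true false
    have e2 := cost_le_add_three p1 p2 p3 (.y' j) true false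
    cases β j <;> simp only [Bool.not_true, Bool.not_false] <;> omega
  have h2 : ∑ j : Fin (2 * m + 4), (cost p1 p2 p3 (.b j) false + 1) ≤
      ∑ j, cost p1 p2 p3 (.b j) true := Finset.sum_le_sum fun j _ => hp (.b j) trivial
  have h3 := cost_le_add_three p1 p2 p3 .a true false
  rw [Finset.sum_add_distrib] at h2
  simp only [Finset.sum_const, Finset.card_univ, Fintype.card_fin, smul_eq_mul] at h1 h2
  omega

/-- If at least two of the ballots are those of `J⃗`, making an issue other than a `u`-issue true
raises the score. -/
lemma bribed_cost {J' : Fin 3 → Issue n m → Bool}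
    (hJ : (Finset.univ.filter (fun k : Fin 3 => J' k ≠ Jp k)).card ≤ 1) (i : Issue n m)
    (hi : NonU i) : cost (J' 0) (J' 1) (J' 2) i false + 1 ≤ cost (J' 0) (J' 1) (J' 2) i true := by
  have hz : ∀ k, (Jp k : Issue n m → Bool) i = false := by
    intro k
    cases i <;> first | rfl | exact hi.elim
  have hf : ∀ k l : Fin 3, k ≠ l → J' k i = false ∨ J' l i = false := by
    intro k l hkl
    by_contra! h
    refine hkl (Finset.card_le_one.1 hJ k ?_ l ?_) <;>
      simp only [Finset.mem_filter, Finset.mem_univ, true_and] <;> intro e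
    · exact h.1 (e ▸ hz k)
    · exact h.2 (e ▸ hz l)
  have h01 := hf 0 1 (by decide)
  have h02 := hf 0 2 (by decide)
  have h12 := hf 1 2 (by decide)
  unfold cost
  revert h01 h02 h12
  generalize J' 0 i = p
  generalize J' 1 i = q
  generalize J' 2 i = s
  revert p q s
  decide

/-! ### Outcomes before and after the bribe for a witness α -/

lemma Jp_cost (i : Issue n m) (hi : NonU i) (v : Bool) :
    cost (Jp 0) (Jp 1) (Jp 2) i v = if v then 3 else 0 := by
  cases i <;> first | exact hi.elim | (cases v <;> rfl)

lemma old_outcome_not_b (hn : 0 < n) (hm : 0 < m)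
    {psi : (Fin n → Bool) → (Fin m → Bool) → Bool} {r : Issue n m → Bool}
    (hr : kemenyMem psi (Jp 0) (Jp 1) (Jp 2) r) : ∃ j, r (.b j) = false := by
  rcases hr.1 with h0 | ⟨k, hk⟩
  swap
  · exact ⟨0, uBlock_b_false (fun i hi => by simp [Jp_cost i hi]) hr k hk 0⟩
  rcases gamma0_cases h0 with h | h | ⟨hx, hy, ha, hb⟩
  · exact ⟨0, h.2.2.2 0⟩
  · exact ⟨0, h.2.2.2.1 0⟩
  exfalso
  have hle := hr.2 _ (zBallot_rational hn hm psi r)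
  rw [dist3_eq, dist3_eq, sum_issue, sum_issue] at hle
  have h1 : ∀ v : Bool, ((if v = true then 3 else 0) + (if (!v) = true then 3 else 0) : ℕ) = 3 := by
    decide
  simp only [zBallot, ha, hb, hy, hx, Jp_cost (.x _) trivial, Jp_cost (.x' _) trivial,
    Jp_cost (.z _) trivial, Jp_cost (.y _) trivial, Jp_cost (.y' _) trivial,
    Jp_cost (.t _) trivial, Jp_cost .a trivial, Jp_cost (.b _) trivial, h1] at hle
  simp at hle

lemma new_outcome_b (hn : 0 < n) (hm : 0 < m) (hmn : m < n)
    {psi : (Fin n → Bool) → (Fin m → Bool) → Bool} {α : Fin n → Bool}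
    (hα : ∀ β, psi α β = true) {r : Issue n m → Bool}
    (hr : kemenyMem psi (target α) (Jp 1) (Jp 2) r) (j : Fin (2 * m + 4)) : r (.b j) = true := by
  have hle := hr.2 _ (target_rational hn hm psi α)
  rw [dist3_eq, dist3_eq, sum_issue, sum_issue] at hle
  have hself : ∀ v : Bool, bdiff v v = 0 := by decide
  have htf : bdiff true false = 1 := rfl
  have hft : bdiff false true = 1 := rfl
  -- Score of the bribed ballot on one pair of an `x`- and an `x'`-issue; the zeros are its
  -- distances from itself.
  have hX : ∀ v : Bool, 0 + bdiff v false + bdiff v false +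
      (0 + bdiff (!v) false + bdiff (!v) false) = 2 := by decide
  -- On one triple of `u`-issues every ballot has score at least 2, and at least 3 if one is true.
  have hU : ∀ v0 v1 v2 : Bool, 2 ≤ bdiff v0 false + bdiff v0 false + bdiff v0 false +
      (bdiff v1 false + bdiff v1 true + bdiff v1 false) +
      (bdiff v2 false + bdiff v2 false + bdiff v2 true) := by decide
  have hU3 : ∀ v0 v1 v2 : Bool, v0 = true ∨ v1 = true ∨ v2 = true →
      3 ≤ bdiff v0 false + bdiff v0 false + bdiff v0 false +
      (bdiff v1 false + bdiff v1 true + bdiff v1 false) +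
      (bdiff v2 false + bdiff v2 false + bdiff v2 true) := by decide
  have e1 : ((1 : Fin 3) == 2) = false := rfl
  have e2 : ((2 : Fin 3) == 1) = false := rfl
  have e3 : ((0 : Fin 3) == 1) = false := rfl
  have e4 : ((0 : Fin 3) == 2) = false := rfl
  simp only [cost, target, Jp, beq_self_eq_true, e1, e2, e3, e4, hX, hself, htf, hft,
    Finset.sum_const, Finset.card_univ, Fintype.card_fin, smul_eq_mul] at hle
  rcases hr.1 with h0 | ⟨k, hk⟩
  swap
  · exfalso
    have hu : ∑ l : Fin (10 * n + 10 * m + 10), 3 ≤ _ :=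
      Finset.sum_le_sum fun l _ => hU3 (r (.u 0 l)) (r (.u 1 l)) (r (.u 2 l)) (by
        fin_cases k
        · exact .inl (hk l)
        · exact .inr (.inl (hk l))
        · exact .inr (.inr (hk l)))
    simp only [Finset.sum_const, Finset.card_univ, Fintype.card_fin, smul_eq_mul] at hu
    omega
  have hu : ∑ l : Fin (10 * n + 10 * m + 10), 2 ≤ _ :=
    Finset.sum_le_sum fun l _ => hU (r (.u 0 l)) (r (.u 1 l)) (r (.u 2 l))
  simp only [Finset.sum_const, Finset.card_univ, Fintype.card_fin, smul_eq_mul] at hu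
  rcases gamma0_cases h0 with ⟨hx, hy, ha, hb⟩ | ⟨hx, hy, ha, hb, hp⟩ | h
  · exfalso
    have hX' : ∀ v : Bool, bdiff false v + bdiff false (!v) = 1 := by decide
    have hX2 : ∑ i : Fin n, (bdiff false (α i) + 0 + 0 + (bdiff false (!α i) + 0 + 0) + 3) =
        ∑ i : Fin n, 4 := Finset.sum_congr rfl fun i _ => by have := hX' (α i); omega
    simp only [hx, hy, ha, hb, hself, htf, hft, Finset.sum_const, Finset.card_univ,
      Fintype.card_fin, smul_eq_mul, Nat.reduceAdd] at hle hX2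
    omega
  · exfalso
    obtain ⟨i₀, hi₀⟩ : ∃ i, r (.x i) ≠ α i := by
      by_contra! h
      have : (fun i => r (.x i)) = α := funext h
      rw [this, hα] at hp
      cases hp
    have hval : ∀ v w : Bool, bdiff v w + bdiff v false + bdiff v false +
        (bdiff (!v) (!w) + bdiff (!v) false + bdiff (!v) false) + 0 =
        2 + if v ≠ w then 2 else 0 := by decide
    have hY : ∀ v : Bool, bdiff v false + bdiff v false + bdiff v false +
        (bdiff (!v) false + bdiff (!v) false + bdiff (!v) false) = 3 := by decide
    have hge : 2 ≤ ∑ i, if r (.x i) ≠ α i then 2 else 0 := by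
      refine le_trans ?_ (Finset.single_le_sum (fun i _ => Nat.zero_le _) (Finset.mem_univ i₀))
      rw [if_pos hi₀]
    simp only [hx, hy, ha, hb, hself, htf, hft, Nat.reduceAdd, hval, hY, Finset.sum_const,
      Finset.card_univ, Fintype.card_fin, smul_eq_mul] at hle
    rw [Finset.sum_add_distrib] at hle
    simp only [Finset.sum_const, Finset.card_univ, Fintype.card_fin, smul_eq_mul] at hle
    omega
  · exact h.2.2.2 j

end Brib

open Brib in
/-- correctness of the cautious bribery reduction: with m < n,
there exists α with ψ[α∪β] true for every β
iff
one can replace at most one ballot of J⃗ = (J₁, J₂, J₃) by a rational ballot, obtaining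
a profile J⃗', such that every Kemeny outcome of J⃗' is strictly closer to J₀
(in weighted Hamming distance w) than every Kemeny outcome of J⃗. -/
theorem brib_reduction_correct (n m : ℕ) (hn : 0 < n) (hm : 0 < m) (hmn : m < n)
    (psi : (Fin n → Bool) → (Fin m → Bool) → Bool) :
    (∃ α : Fin n → Bool, ∀ β : Fin m → Bool, psi α β = true) ↔
    (∃ J' : Fin 3 → Issue n m → Bool,
      (∀ k, rational psi (J' k)) ∧
      (Finset.univ.filter (fun k : Fin 3 => J' k ≠ Jp k)).card ≤ 1 ∧
      (∀ rnew : Issue n m → Bool, kemenyMem psi (J' 0) (J' 1) (J' 2) rnew →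
        ∀ rold : Issue n m → Bool, kemenyMem psi (Jp 0) (Jp 1) (Jp 2) rold →
          whamming wt rnew Jzero < whamming wt rold Jzero)) := by
  constructor
  · rintro ⟨α, hα⟩
    refine ⟨![target α, Jp 1, Jp 2], ?_, ?_, ?_⟩
    · intro k
      fin_cases k
      · exact target_rational hn hm psi α
      · exact Jp_rational psi 1
      · exact Jp_rational psi 2
    · refine (Finset.card_le_card (t := {0}) fun k hk => ?_).trans (Finset.card_singleton _).le
      fin_cases k <;> simp at hk ⊢
    · intro rnew hnew rold hold
      obtain ⟨j, hj⟩ := old_outcome_not_b hn hm hold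
      have hb := new_outcome_b hn hm hmn hα hnew
      rw [whamming_eq, whamming_eq]
      refine Finset.sum_lt_sum (fun i _ => ?_) ⟨j, Finset.mem_univ _, ?_⟩
      · rw [hb i]
        exact Nat.zero_le _
      · rw [hb j, hj]
        decide
  · rintro ⟨J', -, hcard, hlt⟩
    by_contra! hno
    obtain ⟨rnew, hnew⟩ := exists_kemeny psi (J' 0) (J' 1) (J' 2)
    obtain ⟨rold, hold⟩ := exists_kemeny psi (Jp 0 : Issue n m → Bool) (Jp 1) (Jp 2)
    have hb := outcome_b_false hn hm (fun α => by simpa using hno α) (bribed_cost hcard) hnew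
    refine absurd (hlt rnew hnew rold hold) (not_lt.2 ?_)
    rw [whamming_eq, whamming_eq]
    refine Finset.sum_le_sum fun j _ => ?_
    rw [hb j]
    cases rold (.b j) <;> decide
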